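/- Let (K,|·|) be a complete normed field, f ∈ K[z] a polynomial of degree n ≥ 2, and 1 ≤ p ≤ ∞ with conjugate exponent q. Suppose the initial guess x⁰ ∈ Kⁿ has pairwise distinct components and satisfies E(x⁰) = ‖W(x⁰)/d(x⁰)‖_p < 1/2^{1/q} and φ(E(x⁰)) ≤ 1, where φ(t) = ((n−1)^{1/q} t / ((1−t)(1−2^{1/q} t))) · (1 + t/((n−1)^{1/p}(1−2^{1/q} t)))^{n−1}. Then: (i) the Weierstrass iteration x^{k+1} = x^k − W(x^k) is well defined (each x^k has pairwise distinct components), satisfies |x^k_i − x⁰_i| ≤ |W_i(x⁰)|/(1 − β(E(x⁰))) for all k and i, and converges to a root-vector ξ of f, where β(t) = t·φ(t)·(1 − 2^{1/q} t)/t = ((n−1)^{1/q} t/(1−t))·(1 + t/((n−1)^{1/p}(1−2^{1/q} t)))^{n−1}; (ii) for all k ≥ 0 and each index i, |x^k_i − ξ_i| ≤ (θ^k λ^{2^k − 1}/(1 − θ λ^{2^k})) · |x¹_i − x⁰_i| and |x^{k+1}_i − x^k_i| ≤ θ^k λ^{2^k − 1} |x¹_i − x⁰_i|, where λ = φ(E(x⁰))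 and θ = 1 − 2^{1/q} E(x⁰); (iii) if φ(E(x⁰)) < 1, then f has n simple zeros in K. -/

import Mathlib

open Finset Filter Topology
open scoped ENNReal

noncomputable def pnorm {n : ℕ} (p : ℝ≥0∞) (v : Fin n → ℝ) : ℝ :=
  if p = ⊤ then ⨆ i, |v i| else (∑ i, |v i| ^ p.toReal) ^ (1 / p.toReal)

noncomputable def epow (a : ℝ) (p : ℝ≥0∞) : ℝ :=
  if p = ⊤ then 1 else a ^ (1 / p.toReal)

noncomputable def dsep {K : Type*} [NormedField K] {n : ℕ} (x : Fin n → K) (i : Fin n) : ℝ :=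
  sInf {r : ℝ | ∃ j, j ≠ i ∧ r = ‖x i - x j‖}

noncomputable def Wcorr {K : Type*} [NormedField K] {n : ℕ} (f : Polynomial K)
    (x : Fin n → K) (i : Fin n) : K :=
  Polynomial.eval (x i) f / (f.leadingCoeff * ∏ j ∈ Finset.univ.erase i, (x i - x j))

def IsRootVector {K : Type*} [NormedField K] {n : ℕ} (f : Polynomial K) (ξ : Fin n → K) : Prop :=
  ∀ z : K, Polynomial.eval z f = f.leadingCoeff * ∏ i, (z - ξ i)

lemma amgm_pow {ι : Type*} (s : Finset ι) (z : ι → ℝ) (hz : ∀ i ∈ s, 0 ≤ z i) (hs : 0 < #s) :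
    ∏ i ∈ s, z i ≤ ((∑ i ∈ s, z i) / #s) ^ #s := by
  have h := Real.geom_mean_le_arith_mean s (fun _ => 1) z (fun _ _ => zero_le_one)
    (by simpa using hs) hz
  simp only [Real.rpow_one, sum_const, nsmul_eq_mul, mul_one, one_mul] at h
  have h0 : 0 ≤ ∏ i ∈ s, z i := prod_nonneg hz
  have h2 := pow_le_pow_left₀ (Real.rpow_nonneg h0 _) h #s
  rwa [Real.rpow_inv_natCast_pow h0 hs.ne'] at h2

lemma pnorm_nonneg {n : ℕ} (p : ℝ≥0∞) (v : Fin n → ℝ) : 0 ≤ pnorm p v := by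
  unfold pnorm
  split_ifs
  · exact Real.iSup_nonneg (fun i => abs_nonneg _)
  · exact Real.rpow_nonneg (sum_nonneg fun i _ => Real.rpow_nonneg (abs_nonneg _) _) _

lemma epow_pos {a : ℝ} (ha : 0 < a) (p : ℝ≥0∞) : 0 < epow a p := by
  unfold epow
  split_ifs
  · exact one_pos
  · exact Real.rpow_pos_of_pos ha _

lemma one_le_epow {a : ℝ} (ha : 1 ≤ a) (p : ℝ≥0∞) : 1 ≤ epow a p := by
  unfold epow
  split_ifs
  · exact le_rfl
  · exact Real.one_le_rpow ha (by positivity)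

lemma epow_one (p : ℝ≥0∞) : epow 1 p = 1 := by
  unfold epow
  split_ifs <;> simp

lemma conj_cases {p q : ℝ≥0∞} (hp : 1 ≤ p) (hpq : 1 / p + 1 / q = 1) :
    (p = ⊤ ∧ q = 1) ∨ (p = 1 ∧ q = ⊤) ∨
      (p ≠ ⊤ ∧ q ≠ ⊤ ∧ p.toReal.HolderConjugate q.toReal) := by
  simp only [one_div] at hpq
  by_cases h : p = ⊤
  · left
    subst h
    simpa using hpq
  by_cases h1 : p = 1
  · right; left
    subst h1
    refine ⟨rfl, ?_⟩
    simp only [inv_one] at hpq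
    by_contra hq
    have : q⁻¹ = 0 := by
      have h2 : (1:ℝ≥0∞) + q⁻¹ = 1 + 0 := by simpa using hpq
      exact (ENNReal.add_right_inj ENNReal.one_ne_top).1 h2
    exact hq (ENNReal.inv_eq_zero.1 this)
  · right; right
    have hp1 : 1 < p := lt_of_le_of_ne hp (Ne.symm h1)
    have hpr : 1 < p.toReal := by
      have := (ENNReal.toReal_lt_toReal ENNReal.one_ne_top h).2 hp1
      simpa using this
    have : p.HolderConjugate q := (ENNReal.holderConjugate_iff).2 hpq
    have hc := ENNReal.HolderConjugate.toReal (q := q) hpr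
    refine ⟨h, ?_, hc⟩
    rintro rfl
    have := hc.symm.pos
    simp at this

lemma epow_mul {p q : ℝ≥0∞} (hp : 1 ≤ p) (hpq : 1 / p + 1 / q = 1) {a : ℝ} (ha : 0 < a) :
    epow a p * epow a q = a := by
  rcases conj_cases hp hpq with ⟨rfl, rfl⟩ | ⟨rfl, rfl⟩ | ⟨h1, h2, h⟩
  · simp [epow]
  · simp [epow]
  · simp only [epow, h1, h2, if_false]
    rw [← Real.rpow_add ha]
    have := (Real.holderConjugate_iff.1 h).2
    rw [one_div, one_div, this, Real.rpow_one]

lemma holder_pnorm {n : ℕ} {p q : ℝ≥0∞} (hp : 1 ≤ p) (hpq : 1 / p + 1 / q = 1)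
    (v : Fin n → ℝ) (hv : ∀ i, 0 ≤ v i) (s : Finset (Fin n)) :
    ∑ i ∈ s, v i ≤ epow (#s : ℝ) q * pnorm p v := by
  rcases conj_cases hp hpq with ⟨rfl, rfl⟩ | ⟨rfl, rfl⟩ | ⟨h1, h2, h⟩
  · simp only [epow, pnorm, ENNReal.one_ne_top, if_false, if_true, ENNReal.toReal_one, div_one,
      Real.rpow_one]
    rw [← nsmul_eq_mul]
    refine sum_le_card_nsmul _ _ _ fun i _ => ?_
    exact (le_abs_self _).trans (le_ciSup (f := fun i => |v i|) (Set.finite_range _).bddAbove i)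
  · simp only [epow, pnorm, ENNReal.one_ne_top, if_false, if_true, ENNReal.toReal_one, div_one,
      Real.rpow_one, one_mul]
    simp only [abs_of_nonneg (hv _)]
    exact sum_le_sum_of_subset_of_nonneg (subset_univ _) fun i _ _ => hv i
  · have hh := Real.inner_le_Lp_mul_Lq s v (fun _ => 1) h
    simp only [epow, pnorm, h1, h2, if_false]
    simp only [mul_one, abs_one, Real.one_rpow, sum_const, nsmul_eq_mul] at hh
    refine hh.trans ?_
    rw [mul_comm]
    refine mul_le_mul_of_nonneg_left ?_ (by positivity)
    refine Real.rpow_le_rpow (sum_nonneg fun i _ => by positivity) ?_ (by positivity)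
    exact sum_le_sum_of_subset_of_nonneg (subset_univ _) fun i _ _ => by positivity

lemma pnorm_le_mul {n : ℕ} {p : ℝ≥0∞} (hp : 1 ≤ p) (v w : Fin n → ℝ) (c : ℝ) (hc : 0 ≤ c)
    (hv : ∀ i, 0 ≤ v i) (hw : ∀ i, 0 ≤ w i) (h : ∀ i, v i ≤ c * w i) :
    pnorm p v ≤ c * pnorm p w := by
  unfold pnorm
  simp only [abs_of_nonneg (hv _), abs_of_nonneg (hw _)]
  split_ifs with hpt
  · refine Real.iSup_le (fun i => (h i).trans ?_) (mul_nonneg hc (Real.iSup_nonneg hw))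
    exact mul_le_mul_of_nonneg_left (le_ciSup (Set.finite_range _).bddAbove i) hc
  · have hp0 : 0 < p.toReal := ENNReal.toReal_pos (by rintro rfl; simp at hp) hpt
    have hs : 0 ≤ ∑ i, w i ^ p.toReal := sum_nonneg fun i _ => Real.rpow_nonneg (hw i) _
    calc (∑ i, v i ^ p.toReal) ^ (1 / p.toReal)
        ≤ (c ^ p.toReal * ∑ i, w i ^ p.toReal) ^ (1 / p.toReal) := by
          refine Real.rpow_le_rpow (sum_nonneg fun i _ => Real.rpow_nonneg (hv i) _) ?_
            (by positivity)
          rw [mul_sum]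
          refine sum_le_sum fun i _ => ?_
          rw [← Real.mul_rpow hc (hw i)]
          exact Real.rpow_le_rpow (hv i) (h i) hp0.le
      _ = c * (∑ i, w i ^ p.toReal) ^ (1 / p.toReal) := by
          rw [Real.mul_rpow (by positivity) hs, ← Real.rpow_mul hc, mul_one_div_cancel hp0.ne',
            Real.rpow_one]

section
variable {K : Type*} [NormedField K] {n : ℕ}

lemma dsep_le (x : Fin n → K) {i j : Fin n} (h : j ≠ i) : dsep x i ≤ ‖x i - x j‖ :=
  csInf_le ⟨0, by rintro r ⟨j, _, rfl⟩; positivity⟩ ⟨j, h, rfl⟩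

lemma dsep_mem (hn : 2 ≤ n) (x : Fin n → K) (i : Fin n) :
    ∃ j, j ≠ i ∧ dsep x i = ‖x i - x j‖ := by
  have hne : {r : ℝ | ∃ j, j ≠ i ∧ r = ‖x i - x j‖}.Nonempty := by
    have : Nontrivial (Fin n) := Fin.nontrivial_iff_two_le.2 hn
    obtain ⟨j, hj⟩ := exists_ne i
    exact ⟨_, j, hj, rfl⟩
  have hfin : {r : ℝ | ∃ j, j ≠ i ∧ r = ‖x i - x j‖}.Finite := by
    refine (Set.finite_range fun j => ‖x i - x j‖).subset ?_
    rintro r ⟨j, _, rfl⟩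
    exact ⟨j, rfl⟩
  exact hne.csInf_mem hfin

lemma dsep_pos (hn : 2 ≤ n) {x : Fin n → K} (hx : Function.Injective x) (i : Fin n) :
    0 < dsep x i := by
  obtain ⟨j, hj, h⟩ := dsep_mem hn x i
  rw [h, norm_pos_iff, sub_ne_zero]
  exact fun h => hj (hx h).symm

lemma eval_formula (hn : 2 ≤ n) (f : Polynomial K) (hdeg : f.natDegree = n)
    {x : Fin n → K} (hx : Function.Injective x) (z : K) :
    f.eval z = f.leadingCoeff * (∏ j, (z - x j) +
      ∑ j, Wcorr f x j * ∏ l ∈ univ.erase j, (z - x l)) := by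
  have hf0 : f ≠ 0 := by rintro rfl; simp at hdeg; omega
  have ha : f.leadingCoeff ≠ 0 := Polynomial.leadingCoeff_ne_zero.2 hf0
  have hfd : f.degree = (n : WithBot ℕ) := by rw [Polynomial.degree_eq_natDegree hf0, hdeg]
  have key : f - Polynomial.C f.leadingCoeff * Lagrange.nodal univ x =
      ∑ j, Polynomial.C (f.leadingCoeff * Wcorr f x j) * Lagrange.nodal (univ.erase j) x := by
    refine Polynomial.eq_of_degrees_lt_of_eval_index_eq (v := x) univ hx.injOn ?_ ?_ ?_
    · have : (f - Polynomial.C f.leadingCoeff * Lagrange.nodal univ x).degree < f.degree := by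
        refine Polynomial.degree_sub_lt_left ?_ hf0 ?_
        · rw [Polynomial.degree_C_mul ha, Lagrange.degree_nodal, hfd]; simp
        · rw [Polynomial.leadingCoeff_mul, Lagrange.nodal_monic.leadingCoeff]; simp
      rw [hfd] at this
      simpa using this
    · refine lt_of_le_of_lt (Polynomial.degree_sum_le _ _) ?_
      rw [Finset.sup_lt_iff (by simp)]
      intro j _
      refine lt_of_le_of_lt ((Polynomial.degree_mul_le _ _).trans
        (add_le_add_left Polynomial.degree_C_le _)) ?_
      rw [Lagrange.degree_nodal, zero_add]
      have : #(univ.erase j) < #(univ : Finset (Fin n)) := card_erase_lt_of_mem (mem_univ j)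
      exact_mod_cast this
    · intro i _
      have hp : ∏ j ∈ univ.erase i, (x i - x j) ≠ 0 := by
        refine prod_ne_zero_iff.2 fun j hj => sub_ne_zero.2 fun h => ?_
        exact (mem_erase.1 hj).1 (hx h).symm
      rw [Polynomial.eval_sub, Polynomial.eval_mul, Lagrange.eval_nodal_at_node (mem_univ i),
        Polynomial.eval_finsetSum, sum_eq_single i]
      · simp only [Polynomial.eval_mul, Polynomial.eval_C, Lagrange.eval_nodal, Wcorr]
        field_simp
        ring
      · intro j _ hj
        rw [Polynomial.eval_mul, Lagrange.eval_nodal_at_node (mem_erase.2 ⟨hj.symm, mem_univ i⟩),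
          mul_zero]
      · simp
  have h := congrArg (Polynomial.eval z) key
  simp only [Polynomial.eval_sub, Polynomial.eval_mul, Polynomial.eval_C, Lagrange.eval_nodal,
    Polynomial.eval_finsetSum] at h
  rw [mul_add, mul_sum, ← sub_eq_iff_eq_add', h]
  exact sum_congr rfl fun j _ => by ring

lemma Wcorr_step (hn : 2 ≤ n) (f : Polynomial K) (hdeg : f.natDegree = n)
    {x y : Fin n → K} (hx : Function.Injective x) (hy : Function.Injective y)
    (hxy : ∀ i, y i = x i - Wcorr f x i) (i : Fin n)
    (hne : ∀ j, j ≠ i → y i - x j ≠ 0) :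
    Wcorr f y i = - Wcorr f x i * (∑ j ∈ univ.erase i, Wcorr f x j / (y i - x j)) *
      ∏ j ∈ univ.erase i, (1 - Wcorr f x j / (y i - y j)) := by
  have hf0 : f ≠ 0 := by rintro rfl; simp at hdeg; omega
  have ha : f.leadingCoeff ≠ 0 := Polynomial.leadingCoeff_ne_zero.2 hf0
  have hyne : ∀ j ∈ univ.erase i, y i - y j ≠ 0 := fun j hj =>
    sub_ne_zero.2 fun h => (mem_erase.1 hj).1 (hy h).symm
  have hp : ∏ j ∈ univ.erase i, (y i - y j) ≠ 0 := prod_ne_zero_iff.2 hyne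
  have h1 : ∏ j ∈ univ.erase i, (1 - Wcorr f x j / (y i - y j)) =
      (∏ j ∈ univ.erase i, (y i - x j)) / ∏ j ∈ univ.erase i, (y i - y j) := by
    rw [← prod_div_distrib]
    refine prod_congr rfl fun j hj => ?_
    have := hyne j hj
    rw [eq_div_iff this, sub_mul, div_mul_cancel₀ _ this, hxy j]
    ring
  have h2 : ∏ j, (y i - x j) + ∑ j, Wcorr f x j * ∏ l ∈ univ.erase j, (y i - x l) =
      - Wcorr f x i * (∑ j ∈ univ.erase i, Wcorr f x j / (y i - x j)) *
        ∏ j ∈ univ.erase i, (y i - x j) := by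
    have e1 : ∏ j, (y i - x j) = - Wcorr f x i * ∏ j ∈ univ.erase i, (y i - x j) := by
      rw [← mul_prod_erase _ _ (mem_univ i), hxy i]; ring
    rw [← add_sum_erase _ _ (mem_univ i), e1, mul_assoc, sum_mul, mul_sum]
    have e2 : ∀ j ∈ univ.erase i, Wcorr f x j * ∏ l ∈ univ.erase j, (y i - x l) =
        - Wcorr f x i * (Wcorr f x j / (y i - x j) * ∏ l ∈ univ.erase i, (y i - x l)) := by
      intro j hj
      have hj' := hne j (mem_erase.1 hj).1
      have : (y i - x j) * ∏ l ∈ univ.erase j, (y i - x l) =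
          - Wcorr f x i * ∏ l ∈ univ.erase i, (y i - x l) := by
        rw [mul_prod_erase _ (fun l => y i - x l) (mem_univ j), e1]
      field_simp
      linear_combination Wcorr f x j * this
    rw [sum_congr rfl e2]
    ring
  rw [h1]
  conv_lhs => rw [Wcorr, eval_formula hn f hdeg hx, h2]
  field_simp

/-- the auxiliary function `β`. -/
noncomputable def betaF (n : ℕ) (p q : ℝ≥0∞) (t : ℝ) : ℝ :=
  epow ((n : ℝ) - 1) q * t / (1 - t) *
      (1 + t / (epow ((n : ℝ) - 1) p * (1 - epow 2 q * t))) ^ (n - 1)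

lemma betaF_nonneg (hn : 2 ≤ n) (p q : ℝ≥0∞) {t : ℝ} (ht : 0 ≤ t) (htc : epow 2 q * t < 1) :
    0 ≤ betaF n p q t := by
  have hn1 : (0:ℝ) < (n:ℝ) - 1 := by
    have : (2:ℝ) ≤ n := by exact_mod_cast hn
    linarith
  have h1 := epow_pos hn1 q
  have h2 := epow_pos hn1 p
  have hc : 1 ≤ epow 2 q := one_le_epow (by norm_num) q
  have ht1 : t < 1 := by nlinarith
  have h3 : 0 < 1 - t := by linarith
  have h4 : 0 < 1 - epow 2 q * t := by linarith
  unfold betaF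
  positivity

lemma betaF_mul_le (hn : 2 ≤ n) (p q : ℝ≥0∞) {s t u : ℝ} (ht : 0 ≤ t) (htc : epow 2 q * t < 1)
    (hu : 0 ≤ u) (hs : 0 ≤ s) (hs1 : s ≤ 1) (hut : u ≤ s * t) :
    betaF n p q u ≤ s * betaF n p q t := by
  have hn1 : (0:ℝ) < (n:ℝ) - 1 := by
    have : (2:ℝ) ≤ n := by exact_mod_cast hn
    linarith
  have h1 := epow_pos hn1 q
  have h2 := epow_pos hn1 p
  have hc : 1 ≤ epow 2 q := one_le_epow (by norm_num) q
  have ht1 : t < 1 := by nlinarith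
  have h3 : 0 < 1 - t := by linarith
  have h4 : 0 < 1 - epow 2 q * t := by linarith
  have hut' : u ≤ t := by nlinarith
  have h5 : 1 - epow 2 q * t ≤ 1 - epow 2 q * u := by nlinarith
  have h6 : 0 < 1 - epow 2 q * u := by linarith
  have h7 : 0 < 1 - u := by linarith
  unfold betaF
  rw [← mul_assoc]
  have e : s * (epow ((n : ℝ) - 1) q * t / (1 - t)) =
    epow ((n : ℝ) - 1) q * (s * t) / (1 - t) := by ring
  rw [e]
  gcongr

lemma weier_step (hn : 2 ≤ n) (f : Polynomial K) (hdeg : f.natDegree = n)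
    {p q : ℝ≥0∞} (hp : 1 ≤ p) (hpq : 1 / p + 1 / q = 1)
    {x y : Fin n → K} (hx : Function.Injective x)
    (hxy : ∀ i, y i = x i - Wcorr f x i) {E : ℝ}
    (hE : E = pnorm p (fun i => ‖Wcorr f x i‖ / dsep x i)) (hEc : epow 2 q * E < 1) :
    Function.Injective y ∧ (∀ i, ‖Wcorr f y i‖ ≤ betaF n p q E * ‖Wcorr f x i‖) ∧
    pnorm p (fun i => ‖Wcorr f y i‖ / dsep y i) ≤ betaF n p q E / (1 - epow 2 q * E) * E ∧
    (∀ i j, i ≠ j → ‖Wcorr f x i‖ + ‖Wcorr f x j‖ ≤ epow 2 q * E * ‖x i - x j‖) := by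
  set a : Fin n → ℝ := fun i => ‖Wcorr f x i‖ / dsep x i with ha
  have hd := fun i => dsep_pos hn hx i
  have ha0 : ∀ i, 0 ≤ a i := fun i => div_nonneg (norm_nonneg _) (hd i).le
  have hE0 : 0 ≤ E := hE ▸ pnorm_nonneg _ _
  have hn1 : (0:ℝ) < (n:ℝ) - 1 := by
    have : (2:ℝ) ≤ n := by exact_mod_cast hn
    linarith
  have hmq := epow_pos hn1 q
  have hmp := epow_pos hn1 p
  have hmm := epow_mul hp hpq hn1
  have hc : 1 ≤ epow 2 q := one_le_epow (by norm_num) q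
  have hE1 : E < 1 := by nlinarith
  have h3 : 0 < 1 - E := by linarith
  have hθ : 0 < 1 - epow 2 q * E := by linarith
  have haE : ∀ i, a i ≤ E := by
    intro i
    have := holder_pnorm hp hpq a ha0 {i}
    rw [hE]
    simpa [epow_one] using this
  have ha2 : ∀ i j, i ≠ j → a i + a j ≤ epow 2 q * E := by
    intro i j hij
    have := holder_pnorm hp hpq a ha0 {i, j}
    rw [sum_pair hij, card_pair hij] at this
    rw [hE]
    simpa using this
  have hcard : ∀ i : Fin n, #(univ.erase i) = n - 1 := fun i => by
    rw [card_erase_of_mem (mem_univ i)]; simp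
  have hcast : ((n - 1 : ℕ) : ℝ) = (n:ℝ) - 1 := by
    rw [Nat.cast_sub (by omega)]; simp
  have hasum : ∀ i, ∑ j ∈ univ.erase i, a j ≤ epow ((n:ℝ) - 1) q * E := by
    intro i
    have := holder_pnorm hp hpq a ha0 (univ.erase i)
    rwa [hcard, hcast, ← hE] at this
  have hWa : ∀ i, ‖Wcorr f x i‖ = a i * dsep x i := fun i => by
    simp only [ha]; rw [div_mul_cancel₀ _ (hd i).ne']
  have hWi : ∀ i j, j ≠ i → ‖Wcorr f x i‖ ≤ a i * ‖x i - x j‖ := fun i j h => by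
    rw [hWa]; exact mul_le_mul_of_nonneg_left (dsep_le x h) (ha0 i)
  have hWj : ∀ i j, j ≠ i → ‖Wcorr f x j‖ ≤ a j * ‖x i - x j‖ := fun i j h => by
    rw [norm_sub_rev]; exact hWi j i h.symm
  have hsum : ∀ i j, i ≠ j → ‖Wcorr f x i‖ + ‖Wcorr f x j‖ ≤ epow 2 q * E * ‖x i - x j‖ := by
    intro i j hij
    have := mul_le_mul_of_nonneg_right (ha2 i j hij) (norm_nonneg (x i - x j))
    linarith [hWi i j hij.symm, hWj i j hij.symm]
  have hyy : ∀ i j, i ≠ j → (1 - epow 2 q * E) * ‖x i - x j‖ ≤ ‖y i - y j‖ := by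
    intro i j hij
    have e : x i - x j = (y i - y j) + Wcorr f x i - Wcorr f x j := by rw [hxy i, hxy j]; ring
    have t1 : ‖x i - x j‖ ≤ ‖y i - y j‖ + ‖Wcorr f x i‖ + ‖Wcorr f x j‖ := by
      conv_lhs => rw [e]
      exact (norm_sub_le _ _).trans (by gcongr; exact norm_add_le _ _)
    linarith [hsum i j hij]
  have hyx : ∀ i j, j ≠ i → (1 - E) * ‖x i - x j‖ ≤ ‖y i - x j‖ := by
    intro i j hij
    have e : x i - x j = (y i - x j) + Wcorr f x i := by rw [hxy i]; ring
    have t1 : ‖x i - x j‖ ≤ ‖y i - x j‖ + ‖Wcorr f x i‖ := by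
      conv_lhs => rw [e]
      exact norm_add_le _ _
    have := mul_le_mul_of_nonneg_right (haE i) (norm_nonneg (x i - x j))
    linarith [hWi i j hij]
  have hxpos : ∀ i j, j ≠ i → 0 < ‖x i - x j‖ := fun i j h =>
    norm_pos_iff.2 (sub_ne_zero.2 fun h' => h (hx h').symm)
  have hyypos : ∀ i j, j ≠ i → 0 < ‖y i - y j‖ := fun i j h =>
    lt_of_lt_of_le (mul_pos hθ (hxpos i j h)) (hyy i j h.symm)
  have hyxpos : ∀ i j, j ≠ i → 0 < ‖y i - x j‖ := fun i j h =>
    lt_of_lt_of_le (mul_pos h3 (hxpos i j h)) (hyx i j h)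
  have hyinj : Function.Injective y := by
    intro i j h
    by_contra hij
    have := hyypos j i hij
    simp [h] at this
  have hbound : ∀ i, ‖Wcorr f y i‖ ≤ betaF n p q E * ‖Wcorr f x i‖ := by
    intro i
    rw [Wcorr_step hn f hdeg hx hyinj hxy i (fun j h => norm_pos_iff.1 (hyxpos i j h)),
      norm_mul, norm_mul, norm_neg]
    have b1 : ‖∑ j ∈ univ.erase i, Wcorr f x j / (y i - x j)‖ ≤
        epow ((n : ℝ) - 1) q * E / (1 - E) := by
      calc _ ≤ ∑ j ∈ univ.erase i, ‖Wcorr f x j / (y i - x j)‖ := norm_sum_le _ _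
        _ ≤ ∑ j ∈ univ.erase i, a j / (1 - E) := by
          refine sum_le_sum fun j hj => ?_
          have hji := (mem_erase.1 hj).1
          rw [norm_div, div_le_div_iff₀ (hyxpos i j hji) h3]
          have t1 := mul_le_mul_of_nonneg_right (hWj i j hji) h3.le
          have t2 := mul_le_mul_of_nonneg_left (hyx i j hji) (ha0 j)
          linarith
        _ = (∑ j ∈ univ.erase i, a j) / (1 - E) := by rw [sum_div]
        _ ≤ _ := by gcongr; exact hasum i
    have b2 : ‖∏ j ∈ univ.erase i, (1 - Wcorr f x j / (y i - y j))‖ ≤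
        (1 + E / (epow ((n : ℝ) - 1) p * (1 - epow 2 q * E))) ^ (n - 1) := by
      rw [norm_prod]
      calc _ ≤ ∏ j ∈ univ.erase i, (1 + a j / (1 - epow 2 q * E)) := by
            refine prod_le_prod (fun _ _ => norm_nonneg _) fun j hj => ?_
            have hji := (mem_erase.1 hj).1
            refine (norm_sub_le _ _).trans ?_
            rw [norm_one, norm_div]
            gcongr 1 + ?_
            rw [div_le_div_iff₀ (hyypos i j hji) hθ]
            have t1 := mul_le_mul_of_nonneg_right (hWj i j hji) hθ.le
            have t2 := mul_le_mul_of_nonneg_left (hyy i j hji.symm) (ha0 j)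
            linarith
        _ ≤ _ := amgm_pow _ _ (fun j _ => by have := ha0 j; positivity) (by rw [hcard]; omega)
        _ ≤ _ := by
            rw [hcard, hcast]
            have hnn : 0 ≤ ∑ j ∈ univ.erase i, (1 + a j / (1 - epow 2 q * E)) :=
              sum_nonneg fun j _ => by have := ha0 j; positivity
            refine pow_le_pow_left₀ (by positivity) ?_ _
            rw [sum_add_distrib, sum_const, hcard, nsmul_eq_mul, hcast, ← sum_div, div_le_iff₀ hn1]
            have t := div_le_div_of_nonneg_right (hasum i) hθ.le
            have e : (1 + E / (epow ((n : ℝ) - 1) p * (1 - epow 2 q * E))) * ((n:ℝ) - 1) =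
                ((n:ℝ) - 1) + epow ((n : ℝ) - 1) q * E / (1 - epow 2 q * E) := by
              rw [add_mul, one_mul]
              congr 1
              rw [div_mul_eq_mul_div, div_eq_div_iff (by positivity) hθ.ne']
              linear_combination (-E * (1 - epow 2 q * E)) * hmm
            rw [e]
            linarith
    unfold betaF
    calc _ ≤ ‖Wcorr f x i‖ * (epow ((n : ℝ) - 1) q * E / (1 - E)) *
          (1 + E / (epow ((n : ℝ) - 1) p * (1 - epow 2 q * E))) ^ (n - 1) := by gcongr
      _ = _ := by ring
  refine ⟨hyinj, hbound, ?_, hsum⟩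
  have hβ0 := betaF_nonneg hn p q hE0 hEc
  suffices key : pnorm p (fun i => ‖Wcorr f y i‖ / dsep y i) ≤
      betaF n p q E / (1 - epow 2 q * E) * pnorm p a by rwa [← hE] at key
  refine pnorm_le_mul hp _ a _ (div_nonneg hβ0 hθ.le)
    (fun i => div_nonneg (norm_nonneg _) (dsep_pos hn hyinj i).le) ha0 fun i => ?_
  obtain ⟨j, hj, hdj⟩ := dsep_mem hn y i
  have hdd : (1 - epow 2 q * E) * dsep x i ≤ dsep y i := by
    rw [hdj]
    exact (mul_le_mul_of_nonneg_left (dsep_le x hj) hθ.le).trans (hyy i j hj.symm)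
  have hdx := hd i
  calc ‖Wcorr f y i‖ / dsep y i ≤ betaF n p q E * ‖Wcorr f x i‖ /
        ((1 - epow 2 q * E) * dsep x i) := by
        gcongr
        exact hbound i
    _ = _ := by simp only [ha]; field_simp

end

/-- semilocal convergence theorem for the Weierstrass method. Under the
initial conditions `E(x⁰) = ‖W(x⁰)/d(x⁰)‖_p < 1/2^{1/q}` and `φ(E(x⁰)) ≤ 1`:
(i) the iteration is well defined, stays in the closed ball of radius
`|W_i(x⁰)|/(1 − β(E(x⁰)))` around `x⁰_i` componentwise, and converges to a
root-vector `ξ` of `f`; (ii) a priori estimates hold with `λ = φ(E(x⁰))` and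
`θ = 1 − 2^{1/q}E(x⁰)`; (iii) if `φ(E(x⁰)) < 1` then `f` has `n` simple zeros. -/
theorem weierstrass_semilocal_convergence
    {K : Type*} [NormedField K] [CompleteSpace K] {n : ℕ} (hn : 2 ≤ n)
    (f : Polynomial K) (hdeg : f.natDegree = n)
    (p q : ℝ≥0∞) (hp : 1 ≤ p) (hpq : 1 / p + 1 / q = 1)
    (E : (Fin n → K) → ℝ)
    (hE : ∀ y : Fin n → K, E y = pnorm p (fun i => ‖Wcorr f y i‖ / dsep y i))
    (φ β : ℝ → ℝ)
    (hφ : ∀ t : ℝ, φ t = epow ((n : ℝ) - 1) q * t / ((1 - t) * (1 - epow 2 q * t)) *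
      (1 + t / (epow ((n : ℝ) - 1) p * (1 - epow 2 q * t))) ^ (n - 1))
    (hβ : ∀ t : ℝ, β t = epow ((n : ℝ) - 1) q * t / (1 - t) *
      (1 + t / (epow ((n : ℝ) - 1) p * (1 - epow 2 q * t))) ^ (n - 1))
    (x : ℕ → Fin n → K) (hx0 : Function.Injective (x 0))
    (hEx0 : E (x 0) < 1 / epow 2 q) (hφx0 : φ (E (x 0)) ≤ 1)
    (hiter : ∀ k : ℕ, x (k+1) = fun i => x k i - Wcorr f (x k) i) :
    (∀ k : ℕ, Function.Injective (x k)) ∧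
    (∀ k : ℕ, ∀ i : Fin n,
      ‖x k i - x 0 i‖ ≤ ‖Wcorr f (x 0) i‖ / (1 - β (E (x 0)))) ∧
    ∃ ξ : Fin n → K, IsRootVector f ξ ∧
      (∀ i : Fin n, Filter.Tendsto (fun k => x k i) Filter.atTop (nhds (ξ i))) ∧
      (∀ k : ℕ, ∀ i : Fin n,
        ‖x k i - ξ i‖ ≤
          (1 - epow 2 q * E (x 0)) ^ k * φ (E (x 0)) ^ (2 ^ k - 1) /
            (1 - (1 - epow 2 q * E (x 0)) * φ (E (x 0)) ^ 2 ^ k) *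
          ‖x 1 i - x 0 i‖) ∧
      (∀ k : ℕ, ∀ i : Fin n,
        ‖x (k+1) i - x k i‖ ≤
          (1 - epow 2 q * E (x 0)) ^ k * φ (E (x 0)) ^ (2 ^ k - 1) *
          ‖x 1 i - x 0 i‖) ∧
      (φ (E (x 0)) < 1 → Function.Injective ξ) := by
  have hβF : ∀ t, β t = betaF n p q t := hβ
  have hφF : ∀ t, φ t = betaF n p q t / (1 - epow 2 q * t) := by
    intro t
    rw [hφ, betaF, div_mul_eq_div_div, div_mul_eq_mul_div]
  have hc1 : 1 ≤ epow 2 q := one_le_epow (by norm_num) q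
  have hcpos : 0 < epow 2 q := by linarith
  have hE0 : 0 ≤ E (x 0) := by rw [hE]; exact pnorm_nonneg _ _
  have hcE : epow 2 q * E (x 0) < 1 := by
    rw [lt_div_iff₀ hcpos] at hEx0
    linarith
  clear hβ hφ
  set c := epow 2 q with hc
  set e := E (x 0) with he
  set θ := 1 - c * e with hθ
  set L := φ e with hL
  have hθ0 : 0 < θ := by linarith
  have hθ1 : θ ≤ 1 := by nlinarith
  have hβ0 : 0 ≤ betaF n p q e := betaF_nonneg hn p q hE0 hcE
  have hL0 : 0 ≤ L := by rw [hL, hφF]; exact div_nonneg hβ0 hθ0.le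
  have hβL : betaF n p q e = θ * L := by rw [hL, hφF, mul_div_cancel₀ _ hθ0.ne']
  have hr0 : 0 ≤ θ * L := mul_nonneg hθ0.le hL0
  have hr1 : θ * L < 1 := by
    rcases hE0.eq_or_lt with h | h
    · have : betaF n p q e = 0 := by rw [← h]; simp [betaF]
      linarith
    · have : 0 < c * e := by positivity
      nlinarith
  have hy : ∀ k i, x (k+1) i = x k i - Wcorr f (x k) i := fun k i => by rw [hiter k]
  have hpow1 : ∀ m, L ^ m ≤ 1 := fun m => pow_le_one₀ hL0 hφx0
  -- main induction
  have main : ∀ k, Function.Injective (x k) ∧ E (x k) ≤ L ^ (2 ^ k - 1) * e ∧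
      ∀ i, ‖Wcorr f (x k) i‖ ≤ θ ^ k * L ^ (2 ^ k - 1) * ‖Wcorr f (x 0) i‖ := by
    intro k
    induction k with
    | zero => exact ⟨hx0, by simp [he], fun i => by simp⟩
    | succ k ih =>
      obtain ⟨h1, h2, h3⟩ := ih
      have hEk0 : 0 ≤ E (x k) := by rw [hE]; exact pnorm_nonneg _ _
      have hEke : E (x k) ≤ e := h2.trans (by nlinarith [hpow1 (2 ^ k - 1)])
      have hcEk : c * E (x k) < 1 := by nlinarith
      obtain ⟨s1, s2, s3, -⟩ := weier_step hn f hdeg hp hpq h1 (hy k) (hE (x k)) hcEk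
      have hb : betaF n p q (E (x k)) ≤ L ^ (2 ^ k - 1) * (θ * L) := by
        rw [← hβL]
        exact betaF_mul_le hn p q hE0 hcE hEk0 (by positivity) (hpow1 _) h2
      have hexp : 2 ^ (k + 1) - 1 = (2 ^ k - 1) + 1 + (2 ^ k - 1) := by
        have : 1 ≤ 2 ^ k := Nat.one_le_two_pow
        omega
      refine ⟨s1, ?_, fun i => ?_⟩
      · rw [← hE] at s3
        refine s3.trans ?_
        have hq : betaF n p q (E (x k)) / (1 - c * E (x k)) ≤ L ^ (2 ^ k - 1) * L := by
          rw [div_le_iff₀ (by linarith)]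
          refine hb.trans ?_
          have : θ ≤ 1 - c * E (x k) := by nlinarith
          calc L ^ (2 ^ k - 1) * (θ * L) = L ^ (2 ^ k - 1) * L * θ := by ring
            _ ≤ _ := by gcongr
        calc _ ≤ L ^ (2 ^ k - 1) * L * (L ^ (2 ^ k - 1) * e) := by gcongr
          _ = _ := by rw [hexp]; ring
      · refine (s2 i).trans ?_
        calc _ ≤ L ^ (2 ^ k - 1) * (θ * L) * (θ ^ k * L ^ (2 ^ k - 1) * ‖Wcorr f (x 0) i‖) := by
              gcongr
              exact h3 i
          _ = _ := by rw [hexp]; ring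
  have hstep : ∀ k i, ‖x (k+1) i - x k i‖ = ‖Wcorr f (x k) i‖ := by
    intro k i
    rw [hy, sub_sub_cancel_left, norm_neg]
  have hdiff : ∀ k i, ‖x (k+1) i - x k i‖ ≤ θ ^ k * L ^ (2 ^ k - 1) * ‖x 1 i - x 0 i‖ := by
    intro k i
    rw [hstep k i, hstep 0 i]
    exact (main k).2.2 i
  -- geometric bound starting from index `k`
  have hgeo : ∀ k m i, dist (x (k + m) i) (x (k + m + 1) i) ≤
      θ ^ k * L ^ (2 ^ k - 1) * ‖x 1 i - x 0 i‖ * (θ * L ^ 2 ^ k) ^ m := by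
    intro k m i
    rw [dist_comm, dist_eq_norm]
    refine (hdiff (k + m) i).trans ?_
    have hexp : (2 ^ k - 1) + 2 ^ k * m ≤ 2 ^ (k + m) - 1 := by
      have h1 : m + 1 ≤ 2 ^ m := Nat.lt_two_pow_self
      have h2 : 2 ^ k * (m + 1) ≤ 2 ^ k * 2 ^ m := Nat.mul_le_mul_left _ h1
      have h3 : 1 ≤ 2 ^ k := Nat.one_le_two_pow
      rw [pow_add]
      rw [mul_add, mul_one] at h2
      omega
    calc _ ≤ θ ^ (k + m) * L ^ ((2 ^ k - 1) + 2 ^ k * m) * ‖x 1 i - x 0 i‖ := by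
          gcongr ?_ * ?_ * ?_
          exact pow_le_pow_of_le_one hL0 hφx0 hexp
      _ = _ := by rw [pow_add, pow_add, pow_mul, mul_pow]; ring
  have hrk : ∀ k, θ * L ^ 2 ^ k < 1 := by
    intro k
    refine lt_of_le_of_lt ?_ hr1
    gcongr
    exact pow_le_of_le_one hL0 hφx0 (by positivity)
  have hgeo0 : ∀ i m, dist (x m i) (x (m + 1) i) ≤ ‖x 1 i - x 0 i‖ * (θ * L) ^ m := by
    intro i m
    have := hgeo 0 m i
    simpa using this
  have hcau : ∀ i, ∃ l, Tendsto (fun k => x k i) atTop (𝓝 l) := fun i =>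
    cauchySeq_tendsto_of_complete (cauchySeq_of_le_geometric _ _ hr1 (hgeo0 i))
  choose ξ hξ using hcau
  have hlim : ∀ k i, ‖x k i - ξ i‖ ≤
      θ ^ k * L ^ (2 ^ k - 1) / (1 - θ * L ^ 2 ^ k) * ‖x 1 i - x 0 i‖ := by
    intro k i
    have ht : Tendsto (fun m => x (k + m) i) atTop (𝓝 (ξ i)) := by
      have := (tendsto_add_atTop_iff_nat (f := fun m => x m i) k).2 (hξ i)
      simpa [add_comm] using this
    have := dist_le_of_le_geometric_of_tendsto₀ _ _ (hrk k) (fun m => hgeo k m i) ht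
    rw [dist_eq_norm] at this
    refine this.trans (le_of_eq ?_)
    ring
  refine ⟨fun k => (main k).1, ?_, ξ, ?_, hξ, hlim, hdiff, ?_⟩
  · intro k i
    have hW : ‖x 1 i - x 0 i‖ = ‖Wcorr f (x 0) i‖ := hstep 0 i
    have h : ∀ k, ‖x k i - x 0 i‖ ≤ ‖Wcorr f (x 0) i‖ * ∑ m ∈ range k, (θ * L) ^ m := by
      intro k
      have h1 := dist_le_range_sum_of_dist_le (f := fun m => x m i) k (fun {m} _ => hgeo0 i m)
      rw [dist_comm, dist_eq_norm, ← mul_sum, hW] at h1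
      exact h1
    refine (h k).trans ?_
    rw [hβF, hβL, div_eq_mul_inv]
    gcongr
    rw [← tsum_geometric_of_lt_one hr0 hr1]
    exact (summable_geometric_of_lt_one hr0 hr1).sum_le_tsum _ (fun m _ => by positivity)
  · intro z
    have hWlim : ∀ i, Tendsto (fun k => Wcorr f (x k) i) atTop (𝓝 0) := by
      intro i
      have h1 : Tendsto (fun k => x k i - x (k + 1) i) atTop (𝓝 (ξ i - ξ i)) :=
        (hξ i).sub ((tendsto_add_atTop_iff_nat (f := fun m => x m i) 1).2 (hξ i))
      rw [sub_self] at h1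
      refine h1.congr fun k => ?_
      rw [hy, sub_sub_cancel]
    have h2 : Tendsto (fun k => f.leadingCoeff * (∏ j, (z - x k j) +
        ∑ j, Wcorr f (x k) j * ∏ l ∈ univ.erase j, (z - x k l))) atTop
        (𝓝 (f.leadingCoeff * (∏ j, (z - ξ j) +
          ∑ j, 0 * ∏ l ∈ univ.erase j, (z - ξ l)))) := by
      refine Tendsto.const_mul _ (Tendsto.add ?_ ?_)
      · exact tendsto_finsetProd _ fun j _ => (hξ j).const_sub z
      · exact tendsto_finsetSum _ fun j _ => (hWlim j).mul
          (tendsto_finsetProd _ fun l _ => (hξ l).const_sub z)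
    have h3 : Tendsto (fun _ : ℕ => f.eval z) atTop (𝓝 (f.leadingCoeff * (∏ j, (z - ξ j) +
          ∑ j, 0 * ∏ l ∈ univ.erase j, (z - ξ l)))) :=
      h2.congr fun k => (eval_formula hn f hdeg (main k).1 z).symm
    have h4 := tendsto_nhds_unique tendsto_const_nhds h3
    simpa using h4
  · intro hL1 i j hij
    by_contra hne
    obtain ⟨-, -, -, s4⟩ := weier_step hn f hdeg hp hpq hx0 (hy 0) (hE (x 0)) hcE
    have hs := s4 i j hne
    have hpos : 0 < ‖x 0 i - x 0 j‖ :=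
      norm_pos_iff.2 (sub_ne_zero.2 fun h => hne (hx0 h))
    have hi := hlim 0 i
    have hj := hlim 0 j
    have hW : ∀ i, ‖x 1 i - x 0 i‖ = ‖Wcorr f (x 0) i‖ := hstep 0
    simp only [pow_zero, pow_one, Nat.sub_self, mul_one, hW, one_div] at hi hj
    have h1 : 0 < 1 - θ * L := by linarith
    have t : ‖x 0 i - x 0 j‖ ≤ ‖x 0 i - ξ i‖ + ‖x 0 j - ξ j‖ := by
      rw [show x 0 i - x 0 j = (x 0 i - ξ i) - (x 0 j - ξ j) by rw [hij]; ring]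
      exact norm_sub_le _ _
    have t2 : ‖x 0 i - x 0 j‖ ≤ (1 - θ * L)⁻¹ * (c * e * ‖x 0 i - x 0 j‖) := by
      have := mul_le_mul_of_nonneg_left hs (inv_nonneg.2 h1.le)
      rw [mul_add] at this
      linarith
    rw [inv_mul_eq_div, le_div_iff₀ h1] at t2
    have t3 : c * e < 1 - θ * L := by nlinarith
    nlinarith
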